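/- Let S ⊂ ℝ^k be a halfspace, Σ an additive subgroup of ℝ^k, and G ∈ (AP^k_Σ)^{m×n} with m < n (respectively, m > n). Then G admits a left (AP_S)_Σ factorization with factorization indices λ_1, …, λ_p (p = max{m,n}) if and only if G can be augmented by n−m additional rows (respectively, m−n additional columns) with entries in AP^k_Σ to a square p×p matrix function that admits a left (AP_S)_Σ factorization with the same indices. In particular, G admits a canonical (AP_S)_Σ factorization if and only if G can be augmented to a square matrix function admitting a canonical (AP_S)_Σ factorization. -/

import Mathlib

/- Almost periodic functions of `k` real variables, their Bohr-Fourier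
coefficients and spectra, the Wiener algebra, and halfspaces. -/

open MeasureTheory Filter BoundedContinuousFunction

noncomputable section

/-- The Banach algebra of bounded continuous functions `ℝ^k → ℂ` (sup norm). -/
abbrev APB (k : ℕ) := BoundedContinuousFunction (Fin k → ℝ) ℂ

/-- The elementary exponential `e_λ(x) = e^{i⟨λ,x⟩}` as a bounded continuous function. -/
def apExp (k : ℕ) (lam : Fin k → ℝ) : APB k :=
  BoundedContinuousFunction.ofNormedAddCommGroup
    (fun x => Complex.exp (Complex.I * ((∑ j, lam j * x j : ℝ) : ℂ)))
    (by fun_prop) 1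
    (fun x => by
      simp [Complex.norm_exp, Complex.mul_re])

/-- `AP^k`: the closed subalgebra of `L^∞`-type bounded continuous functions
generated by all exponentials `e_λ`, `λ ∈ ℝ^k`. -/
def APalg (k : ℕ) : Subalgebra ℂ (APB k) :=
  (Algebra.adjoin ℂ (Set.range (apExp k))).topologicalClosure

/-- The Bohr-Fourier coefficient
`f_λ = lim_{T→∞} (2T)^{-k} ∫_{[-T,T]^k} e^{-i⟨λ,x⟩} f(x) dx`. -/
def bohrCoeff (k : ℕ) (f : (Fin k → ℝ) → ℂ) (lam : Fin k → ℝ) : ℂ :=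
  limUnder atTop (fun T : ℝ =>
    (((2 * T) ^ k : ℝ) : ℂ)⁻¹ *
      ∫ x in Set.Icc (fun _ => -T : Fin k → ℝ) (fun _ => T),
        Complex.exp (-(Complex.I * ((∑ j, lam j * x j : ℝ) : ℂ))) * f x)

/-- The Bohr-Fourier spectrum `σ(f) = {λ : f_λ ≠ 0}`. -/
def bohrSpectrum (k : ℕ) (f : (Fin k → ℝ) → ℂ) : Set (Fin k → ℝ) :=
  {lam | bohrCoeff k f lam ≠ 0}

/-- Membership in `AP^k_Δ = {f ∈ AP^k : σ(f) ⊆ Δ}`. -/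
def APmem (k : ℕ) (Δ : Set (Fin k → ℝ)) (f : APB k) : Prop :=
  f ∈ APalg k ∧ bohrSpectrum k ⇑f ⊆ Δ

/-- Membership in the Wiener algebra `APW^k_Δ`: almost periodic with spectrum
in `Δ` and absolutely convergent Bohr-Fourier series. -/
def APWmem (k : ℕ) (Δ : Set (Fin k → ℝ)) (f : APB k) : Prop :=
  APmem k Δ f ∧ Summable (fun lam => ‖bohrCoeff k (⇑f) lam‖)

/-- The Wiener norm `‖f‖_W = ∑_λ |f_λ|`. -/
def wienerNorm (k : ℕ) (f : (Fin k → ℝ) → ℂ) : ℝ :=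
  ∑' lam, ‖bohrCoeff k f lam‖

/-- A halfspace `S ⊂ ℝ^k`: `ℝ^k = S ∪ (-S)`, `S ∩ (-S) = {0}`, and `S` is
closed under addition and under multiplication by nonnegative reals. -/
structure IsHalfspace (k : ℕ) (S : Set (Fin k → ℝ)) : Prop where
  union : S ∪ -S = Set.univ
  inter : S ∩ -S = {0}
  add_mem : ∀ x ∈ S, ∀ y ∈ S, x + y ∈ S
  smul_mem : ∀ x ∈ S, ∀ a : ℝ, 0 ≤ a → a • x ∈ S

/- Left `(AP_S)_Σ` and `(APW_S)_Σ` factorizations of rectangular almost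
periodic matrix functions. -/

/-- `G = G⁺ · diag(e_{λ_1},…,e_{λ_p}) · G⁻` is a left `(AP_S)_Σ` factorization
of `G` with factorization indices `lam`: the entries of `G⁺` lie in
`AP^k_{Σ∩S}` and `G⁺` is right invertible over `AP^k_{Σ∩S}`, the entries of
`G⁻` lie in `AP^k_{Σ∩(-S)}` and `G⁻` is left invertible over `AP^k_{Σ∩(-S)}`,
and all indices lie in `Σ`. -/
def IsAPFactorization (k : ℕ) {m n p : ℕ} (S Sg : Set (Fin k → ℝ))
    (G : Matrix (Fin m) (Fin n) (APB k)) (lam : Fin p → (Fin k → ℝ))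
    (Gp : Matrix (Fin m) (Fin p) (APB k)) (Gm : Matrix (Fin p) (Fin n) (APB k)) : Prop :=
  (∀ i j, APmem k (Sg ∩ S) (Gp i j)) ∧
  (∀ i j, APmem k (Sg ∩ (-S)) (Gm i j)) ∧
  (∀ j, lam j ∈ Sg) ∧
  (∃ Gpr : Matrix (Fin p) (Fin m) (APB k),
      (∀ i j, APmem k (Sg ∩ S) (Gpr i j)) ∧ Gp * Gpr = 1) ∧
  (∃ Gml : Matrix (Fin n) (Fin p) (APB k),
      (∀ i j, APmem k (Sg ∩ (-S)) (Gml i j)) ∧ Gml * Gm = 1) ∧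
  G = Gp * Matrix.diagonal (fun j => apExp k (lam j)) * Gm

/-- A left `(APW_S)_Σ` factorization: as `IsAPFactorization`, with the Wiener
algebra `APW` in place of `AP` throughout. -/
def IsAPWFactorization (k : ℕ) {m n p : ℕ} (S Sg : Set (Fin k → ℝ))
    (G : Matrix (Fin m) (Fin n) (APB k)) (lam : Fin p → (Fin k → ℝ))
    (Gp : Matrix (Fin m) (Fin p) (APB k)) (Gm : Matrix (Fin p) (Fin n) (APB k)) : Prop :=
  (∀ i j, APWmem k (Sg ∩ S) (Gp i j)) ∧
  (∀ i j, APWmem k (Sg ∩ (-S)) (Gm i j)) ∧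
  (∀ j, lam j ∈ Sg) ∧
  (∃ Gpr : Matrix (Fin p) (Fin m) (APB k),
      (∀ i j, APWmem k (Sg ∩ S) (Gpr i j)) ∧ Gp * Gpr = 1) ∧
  (∃ Gml : Matrix (Fin n) (Fin p) (APB k),
      (∀ i j, APWmem k (Sg ∩ (-S)) (Gml i j)) ∧ Gml * Gm = 1) ∧
  G = Gp * Matrix.diagonal (fun j => apExp k (lam j)) * Gm

/-!
Deleting rows of `G^+` turns a factorization of an augmented matrix into one of `G`. Conversely, it
suffices to complete the right invertible factor `G^+` to an invertible square matrix over
`AP^k_{Σ ∩ S}`; augmentation by columns follows by transposition, which exchanges `S` and `-S`.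

Completability is locally constant on right invertible matrices, since a matrix `N` near `M` is
`M * (1 + R * (N - M))` when `M * R = 1`. An almost periodic function with spectrum in `Δ` is a
limit of exponential polynomials with frequencies in `Δ`, by Bochner–Fejér summation over finite
sets of frequencies that are almost invariant under translation. Hence `G^+` and its right inverse
may be replaced by polynomial matrices `P` and `Q` with `P * Q` close to `1`. Their nonzero
frequencies satisfy `0 < ⟨a, v⟩` for some vector `v`, and multiplying the coefficient of `e_a` by
`s ^ ⟨a, v⟩` is a homomorphism which, by the Phragmén–Lindelöf principle, does not increase the
sup norm for `s ∈ [0, 1]`. So `P` stays right invertible as `s` decreases from `1` to `0`, where it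
becomes a constant matrix, and a constant right invertible matrix is completable by linear algebra.
-/

/-! ### Exponentials and exponential polynomials -/

section Exponentials

variable {k : ℕ}

theorem apExp_apply (lam x : Fin k → ℝ) :
    apExp k lam x = Complex.exp (Complex.I * ((∑ j, lam j * x j : ℝ) : ℂ)) := rfl

@[simp]
theorem apExp_zero : apExp k 0 = 1 := by
  ext x
  simp [apExp_apply]

theorem apExp_add (a b : Fin k → ℝ) : apExp k (a + b) = apExp k a * apExp k b := by
  ext x
  simp only [BoundedContinuousFunction.mul_apply, apExp_apply, ← Complex.exp_add, Pi.add_apply,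
    add_mul, Finset.sum_add_distrib, Complex.ofReal_add, mul_add]

/-- The closed subalgebra of `APB k` generated by the exponentials with frequencies in `Δ`. -/
def apClosure (k : ℕ) (Δ : AddSubmonoid (Fin k → ℝ)) : Subalgebra ℂ (APB k) :=
  (Algebra.adjoin ℂ (apExp k '' Δ)).topologicalClosure

/-- The exponential `e_a` as an element of `apClosure k Δ`. -/
def apClosureExp (Δ : AddSubmonoid (Fin k → ℝ)) (a : Δ) : apClosure k Δ :=
  ⟨apExp k a, Subalgebra.le_topologicalClosure _ (Algebra.subset_adjoin ⟨a, a.2, rfl⟩)⟩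

instance (Δ : AddSubmonoid (Fin k → ℝ)) : CompleteSpace (apClosure k Δ) :=
  (Subalgebra.isClosed_topologicalClosure _).completeSpace_coe

theorem toSubmodule_adjoin_apExp (Δ : AddSubmonoid (Fin k → ℝ)) :
    Subalgebra.toSubmodule (Algebra.adjoin ℂ (apExp k '' Δ)) =
      Submodule.span ℂ (apExp k '' Δ) := by
  let E : Submonoid (APB k) :=
    { carrier := apExp k '' Δ
      mul_mem' := by
        rintro _ _ ⟨a, ha, rfl⟩ ⟨b, hb, rfl⟩
        exact ⟨a + b, Δ.add_mem ha hb, apExp_add a b⟩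
      one_mem' := ⟨0, Δ.zero_mem, apExp_zero⟩ }
  rw [Algebra.adjoin_eq_span]
  exact congrArg (fun T : Submonoid (APB k) => Submodule.span ℂ (T : Set (APB k))) E.closure_eq

theorem mem_apClosure_iff {Δ : AddSubmonoid (Fin k → ℝ)} {f : APB k} :
    f ∈ apClosure k Δ ↔ f ∈ (Submodule.span ℂ (apExp k '' Δ)).topologicalClosure := by
  rw [← toSubmodule_adjoin_apExp]
  rfl

theorem dense_span_apClosureExp (Δ : AddSubmonoid (Fin k → ℝ)) :
    Dense (Submodule.span ℂ (Set.range (apClosureExp Δ)) : Set (apClosure k Δ)) := by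
  intro f
  have hspan : Subtype.val '' (Submodule.span ℂ (Set.range (apClosureExp Δ)) :
      Set (apClosure k Δ)) = Submodule.span ℂ (apExp k '' Δ) := by
    have hrange : apExp k '' Δ = Subtype.val '' Set.range (apClosureExp Δ) := by
      rw [Set.image_eq_range, ← Set.range_comp]
      rfl
    rw [hrange]
    exact congrArg SetLike.coe (Submodule.map_span (apClosure k Δ).val.toLinearMap _)
  rw [closure_subtype, hspan]
  exact mem_apClosure_iff.1 f.2

end Exponentials

/-! ### Bohr means -/

section BohrMean

theorem exists_continuousLinearMap_tendsto {𝕜 E F ι : Type*} [NontriviallyNormedField 𝕜]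
    [NormedAddCommGroup E] [NormedSpace 𝕜 E] [NormedAddCommGroup F] [NormedSpace 𝕜 F]
    [CompleteSpace F] {l : Filter ι} [l.NeBot] {T : ι → E →ₗ[𝕜] F} (hT : ∀ i x, ‖T i x‖ ≤ ‖x‖)
    {s : Set E} (hs : Dense (Submodule.span 𝕜 s : Set E))
    (hlim : ∀ x ∈ s, ∃ y, Tendsto (T · x) l (nhds y)) :
    ∃ L : E →L[𝕜] F, ∀ x, Tendsto (T · x) l (nhds (L x)) := by
  let D (p : ι × ι) : E →L[𝕜] F := (T p.2 - T p.1).mkContinuous 2 fun x => by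
    rw [LinearMap.sub_apply, two_mul]
    exact (norm_sub_le _ _).trans (add_le_add (hT _ _) (hT _ _))
  have hclosed : IsClosed {x | Tendsto (D · x) (l ×ˢ l) (nhds 0)} :=
    (LipschitzWith.uniformEquicontinuous _ 2 fun p => (D p).lipschitz.weaken
      (LinearMap.mkContinuous_norm_le _ two_pos.le _)).equicontinuous.isClosed_setOfPred_tendsto
      continuous_const
  have hset : {x | Tendsto (D · x) (l ×ˢ l) (nhds 0)} = {x | ∃ y, Tendsto (T · x) l (nhds y)} := by
    ext x
    rw [Set.mem_ofPred, Set.mem_ofPred, ← cauchy_map_iff_exists_tendsto, cauchy_map_iff',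
      uniformity_eq_comap_nhds_zero, tendsto_comap_iff]
    rfl
  have hspan : ∀ x ∈ Submodule.span 𝕜 s, ∃ y, Tendsto (T · x) l (nhds y) := fun x hx => by
    induction hx using Submodule.span_induction with
    | mem x hx => exact hlim x hx
    | zero => exact ⟨0, by simp⟩
    | add x y _ _ hx hy =>
      obtain ⟨⟨a, ha⟩, ⟨b, hb⟩⟩ := And.intro hx hy
      exact ⟨a + b, by simpa only [map_add] using ha.add hb⟩
    | smul c x _ hx =>
      obtain ⟨a, ha⟩ := hx
      exact ⟨c • a, by simpa only [map_smul] using ha.const_smul c⟩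
  have hall : ∀ x, ∃ y, Tendsto (T · x) l (nhds y) := fun x => by
    rw [hset] at hclosed
    exact hclosed.closure_subset_iff.2 hspan (hs x)
  choose y hy using hall
  let L : E →ₗ[𝕜] F := linearMapOfTendsto y T (tendsto_pi_nhds.2 hy)
  exact ⟨L.mkContinuous 1 fun x => by
    rw [one_mul]
    exact le_of_tendsto (hy x).norm (Eventually.of_forall (hT · x)), hy⟩

variable {k : ℕ}

/-- The mean over the box `[-T, T]^k`, a linear functional. -/
def boxMean (k : ℕ) (T : ℝ) : APB k →ₗ[ℂ] ℂ where
  toFun f := (((2 * T) ^ k : ℝ) : ℂ)⁻¹ * ∫ x in Set.Icc (fun _ => -T : Fin k → ℝ) (fun _ => T), f x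
  map_add' f g := by
    rw [← mul_add, ← integral_add (f.continuous.integrableOn_Icc) (g.continuous.integrableOn_Icc)]
    rfl
  map_smul' c f := by
    rw [RingHom.id_apply, smul_eq_mul, mul_left_comm]
    exact congrArg _ (integral_const_mul c _)

theorem boxMean_apply (T : ℝ) (f : APB k) : boxMean k T f = (((2 * T) ^ k : ℝ) : ℂ)⁻¹ *
    ∫ x in Set.Icc (fun _ => -T : Fin k → ℝ) (fun _ => T), f x := rfl

theorem norm_boxMean_le (T : ℝ) (f : APB k) : ‖boxMean k T f‖ ≤ ‖f‖ := by
  have hvol : volume.real (Set.Icc (fun _ => -T : Fin k → ℝ) (fun _ => T)) = max (2 * T) 0 ^ k := by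
    simp [Measure.real, Real.volume_Icc_pi, two_mul, ENNReal.toReal_ofReal']
  have hint := norm_setIntegral_le_of_norm_le_const (μ := volume)
    (isCompact_Icc (a := fun _ : Fin k => -T) (b := fun _ => T)).measure_lt_top
    fun x _ => f.norm_coe_le_norm x
  rw [hvol] at hint
  have hratio : |2 * T|⁻¹ * max (2 * T) 0 ≤ 1 :=
    inv_mul_le_one_of_le₀ (max_le (le_abs_self _) (abs_nonneg _)) (abs_nonneg _)
  calc ‖boxMean k T f‖ ≤ (|2 * T| ^ k)⁻¹ * (‖f‖ * max (2 * T) 0 ^ k) := by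
        rw [boxMean_apply, norm_mul, norm_inv, Complex.norm_real, norm_pow, Real.norm_eq_abs]
        gcongr
    _ = ‖f‖ * (|2 * T|⁻¹ * max (2 * T) 0) ^ k := by ring
    _ ≤ ‖f‖ := mul_le_of_le_one_right (norm_nonneg f) (pow_le_one₀ (by positivity) hratio)

theorem norm_boxMean_le_re {T : ℝ} (hT : 0 ≤ T) {f g : APB k} (hfg : ∀ x, ‖f x‖ ≤ (g x).re) :
    ‖boxMean k T f‖ ≤ (boxMean k T g).re := by
  have hre : (∫ x in Set.Icc (fun _ => -T : Fin k → ℝ) (fun _ => T), g x).re =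
      ∫ x in Set.Icc (fun _ => -T : Fin k → ℝ) (fun _ => T), (g x).re :=
    (integral_re g.continuous.integrableOn_Icc).symm
  have hpos : 0 ≤ ((2 * T) ^ k)⁻¹ := by positivity
  rw [boxMean_apply, boxMean_apply, ← Complex.ofReal_inv, Complex.re_ofReal_mul, hre, norm_mul,
    Complex.norm_real, Real.norm_of_nonneg hpos]
  gcongr
  exact norm_integral_le_of_norm_le g.continuous.integrableOn_Icc.re (Eventually.of_forall hfg)

theorem inv_mul_integral_Icc_exp_eq_sinc {T : ℝ} (hT : 0 < T) (r : ℝ) :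
    ((2 * T : ℝ) : ℂ)⁻¹ * ∫ x in Set.Icc (-T) T, Complex.exp (Complex.I * (r * x : ℝ)) =
      Real.sinc (r * T) := by
  rw [integral_Icc_eq_integral_Ioc, ← intervalIntegral.integral_of_le (by linarith)]
  have hT0 : ((2 * T : ℝ) : ℂ) ≠ 0 := by exact_mod_cast (mul_pos two_pos hT).ne'
  rcases eq_or_ne r 0 with rfl | hr
  · simp only [zero_mul, Complex.ofReal_zero, mul_zero, Complex.exp_zero, Real.sinc_zero,
      intervalIntegral.integral_const, sub_neg_eq_add, ← two_mul, Complex.real_smul, mul_one,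
      inv_mul_cancel₀ hT0, Complex.ofReal_one]
  · have hr0 : (r : ℂ) ≠ 0 := by exact_mod_cast hr
    have hsubst := intervalIntegral.smul_integral_comp_mul_left (a := -T) (b := T)
      (fun t : ℝ => Complex.exp (t * Complex.I)) r
    rw [mul_neg, integral_exp_mul_I_eq_sinc, Complex.real_smul] at hsubst
    simp only [mul_comm Complex.I]
    rw [← mul_right_inj' hr0, mul_left_comm, hsubst]
    rw [Complex.ofReal_mul r T, Complex.ofReal_mul 2 T, Complex.ofReal_ofNat] at *
    field_simp [right_ne_zero_of_mul hT0]

theorem boxMean_apExp {T : ℝ} (hT : 0 < T) (lam : Fin k → ℝ) :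
    boxMean k T (apExp k lam) = ∏ j, (Real.sinc (lam j * T) : ℂ) := by
  simp only [← inv_mul_integral_Icc_exp_eq_sinc hT]
  rw [boxMean_apply, Finset.prod_mul_distrib, ← integral_fintype_prod_eq_prod,
    ← Measure.restrict_pi_pi, Set.pi_univ_Icc]
  simp only [Finset.prod_const, Finset.card_univ, Fintype.card_fin, inv_pow, apExp_apply,
    Complex.ofReal_sum, Finset.mul_sum, Complex.exp_sum, Complex.ofReal_pow, volume_pi]

theorem tendsto_sinc_cocompact : Tendsto Real.sinc (cocompact ℝ) (nhds 0) := by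
  refine squeeze_zero_norm' ?_ (tendsto_inv_atTop_zero.comp (tendsto_norm_cocompact_atTop (E := ℝ)))
  filter_upwards [(Set.finite_singleton (0 : ℝ)).isCompact.compl_mem_cocompact] with x hx
  rw [Real.sinc_of_ne_zero hx, norm_div]
  exact (div_le_div_of_nonneg_right (Real.abs_sin_le_one x) (norm_nonneg x)).trans_eq
    (one_div _)

theorem tendsto_boxMean_apExp (lam : Fin k → ℝ) :
    Tendsto (fun T => boxMean k T (apExp k lam)) atTop (nhds (if lam = 0 then 1 else 0)) := by
  have hsinc (r : ℝ) : Tendsto (fun T : ℝ => (Real.sinc (r * T) : ℂ)) atTop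
      (nhds (if r = 0 then 1 else 0)) := by
    split_ifs with hr
    · simp [hr]
    · have hcocompact : Tendsto (r * ·) atTop (cocompact ℝ) :=
        (Homeomorph.mulLeft₀ r hr).isClosedEmbedding.tendsto_cocompact.mono_left atTop_le_cocompact
      exact (Complex.continuous_ofReal.tendsto 0).comp (tendsto_sinc_cocompact.comp hcocompact)
  have hprod : (∏ j, if lam j = 0 then 1 else 0) = (if lam = 0 then 1 else 0 : ℂ) := by
    simp [Fintype.prod_boole, funext_iff]
  refine (hprod ▸ tendsto_finsetProd Finset.univ fun j _ => hsinc (lam j)).congr' ?_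
  filter_upwards [eventually_gt_atTop 0] with T hT
  exact (boxMean_apExp hT lam).symm

theorem exists_tendsto_boxMean (k : ℕ) :
    ∃ L : apClosure k ⊤ →L[ℂ] ℂ, ∀ f : apClosure k ⊤,
      Tendsto (fun T => boxMean k T f) atTop (nhds (L f)) := by
  let mean (T : ℝ) : apClosure k ⊤ →ₗ[ℂ] ℂ := boxMean k T ∘ₗ (apClosure k ⊤).val.toLinearMap
  have hlim : ∀ f ∈ Set.range (apClosureExp (k := k) ⊤),
      ∃ y, Tendsto (mean · f) atTop (nhds y) := by
    rintro _ ⟨a, rfl⟩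
    exact ⟨_, tendsto_boxMean_apExp (a : Fin k → ℝ)⟩
  have hcontr (T : ℝ) (f : apClosure k ⊤) : ‖mean T f‖ ≤ ‖f‖ := norm_boxMean_le T (f : APB k)
  exact exists_continuousLinearMap_tendsto hcontr (dense_span_apClosureExp ⊤) hlim

/-- The Bohr mean of an almost periodic function: the limit of its means over growing boxes. -/
def bohrMean (k : ℕ) : apClosure k ⊤ →L[ℂ] ℂ :=
  (exists_tendsto_boxMean k).choose

theorem tendsto_boxMean_bohrMean (f : apClosure k ⊤) :
    Tendsto (fun T => boxMean k T f) atTop (nhds (bohrMean k f)) :=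
  (exists_tendsto_boxMean k).choose_spec f

theorem bohrMean_apClosureExp (a : (⊤ : AddSubmonoid (Fin k → ℝ))) :
    bohrMean k (apClosureExp ⊤ a) = if (a : Fin k → ℝ) = 0 then 1 else 0 :=
  tendsto_nhds_unique (tendsto_boxMean_bohrMean (apClosureExp ⊤ a))
    (tendsto_boxMean_apExp (a : Fin k → ℝ))

theorem norm_bohrMean_le_re {f g : apClosure k ⊤}
    (hfg : ∀ x, ‖(f : APB k) x‖ ≤ ((g : APB k) x).re) : ‖bohrMean k f‖ ≤ (bohrMean k g).re := by
  refine le_of_tendsto_of_tendsto (tendsto_boxMean_bohrMean f).norm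
    ((Complex.continuous_re.tendsto _).comp (tendsto_boxMean_bohrMean g)) ?_
  filter_upwards [eventually_ge_atTop 0] with T hT
  exact norm_boxMean_le_re hT hfg

theorem bohrCoeff_eq_bohrMean (f : apClosure k ⊤) (lam : Fin k → ℝ) :
    bohrCoeff k f lam = bohrMean k (apClosureExp ⊤ ⟨-lam, trivial⟩ * f) := by
  refine Tendsto.limUnder_eq ?_
  convert tendsto_boxMean_bohrMean (apClosureExp ⊤ ⟨-lam, trivial⟩ * f) using 2
  simp [boxMean_apply, apClosureExp, apExp_apply]

theorem APalg_eq_apClosure_top (k : ℕ) : APalg k = apClosure k ⊤ := by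
  rw [APalg, apClosure, AddSubmonoid.coe_top, Set.image_univ]

end BohrMean

/-! ### Almost invariant finite sets -/

section AlmostInvariant

open scoped Pointwise

variable {E : Type*} [DecidableEq E]

theorem nsmul_zero_pair_subset [AddMonoid E] (n : ℕ) (a : E) :
    n • ({0, a} : Finset E) ⊆ (Finset.range (n + 1)).image (· • a) := by
  induction n with
  | zero => exact (zero_nsmul _).subset.trans (Finset.singleton_subset_iff.2 (by simp))
  | succ n ih =>
    rw [succ_nsmul]
    refine (Finset.add_subset_add_right ih).trans (Finset.add_subset_iff.2 fun x hx y hy => ?_)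
    obtain ⟨c, hc, rfl⟩ := Finset.mem_image.1 hx
    have hc' := Finset.mem_range.1 hc
    rcases Finset.mem_insert.1 hy with rfl | hy
    · exact Finset.mem_image.2 ⟨c, Finset.mem_range.2 (by omega), (add_zero _).symm⟩
    · rw [Finset.mem_singleton.1 hy]
      exact Finset.mem_image.2 ⟨c + 1, Finset.mem_range.2 (by omega), succ_nsmul a c⟩

theorem card_nsmul_insert_zero_le [AddCommMonoid E] (s : Finset E) (n : ℕ) :
    (n • insert 0 s).card ≤ (n + 1) ^ s.card := by
  induction s using Finset.induction_on with
  | empty => simp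
  | insert a s ha ih =>
    have hsub : insert 0 (insert a s) ⊆ {0, a} + insert 0 s := by
      intro x hx
      rcases Finset.mem_insert.1 hx with rfl | hx
      · exact Finset.mem_add.2 ⟨0, by simp, 0, by simp, add_zero 0⟩
      rcases Finset.mem_insert.1 hx with rfl | hx
      · exact Finset.mem_add.2 ⟨x, by simp, 0, by simp, add_zero x⟩
      · exact Finset.mem_add.2 ⟨0, by simp, x, by simp [hx], zero_add x⟩
    have hpair : (n • ({0, a} : Finset E)).card ≤ n + 1 :=
      (Finset.card_le_card (nsmul_zero_pair_subset n a)).trans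
        (Finset.card_image_le.trans_eq (Finset.card_range _))
    calc (n • insert 0 (insert a s)).card
        ≤ (n • ({0, a} : Finset E) + n • insert 0 s).card := by
          rw [← nsmul_add]
          exact Finset.card_le_card (Finset.nsmul_subset_nsmul_left hsub)
      _ ≤ (n + 1) * (n + 1) ^ s.card := Finset.card_add_le.trans (Nat.mul_le_mul hpair ih)
      _ = (n + 1) ^ (insert a s).card := by rw [Finset.card_insert_of_notMem ha, pow_succ']

theorem exists_succ_le_mul_of_le_pow {u : ℕ → ℝ} {d : ℕ} (hu : ∀ n, u n ≤ (n + 1 : ℝ) ^ d)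
    (h0 : 0 < u 0) {c : ℝ} (hc : 1 < c) : ∃ n, u (n + 1) ≤ c * u n := by
  by_contra! hcon
  have hgeom (n : ℕ) : c ^ n * u 0 ≤ (n + 1 : ℝ) ^ d :=
    (geom_le (zero_le_one.trans hc.le) n fun i _ => (hcon i).le).trans (hu n)
  have hlim := (tendsto_add_atTop_iff_nat 1).2 (tendsto_pow_const_div_const_pow_of_one_lt d hc)
  obtain ⟨n, hn⟩ := (hlim.eventually_lt_const (show 0 < u 0 / c by positivity)).exists
  rw [div_lt_div_iff₀ (by positivity) (by positivity), pow_succ, ← mul_assoc] at hn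
  have := lt_of_mul_lt_mul_right hn (by positivity)
  push_cast at this
  linarith [hgeom n]

/-- The proportion of elements of `F` whose translate by `a` lies in `F`. -/
def overlap [Add E] (F : Finset E) (a : E) : ℝ :=
  (F.filter fun b => b + a ∈ F).card / F.card

theorem overlap_le_one [Add E] (F : Finset E) (a : E) : overlap F a ≤ 1 :=
  div_le_one_of_le₀ (Nat.cast_le.2 (Finset.card_filter_le _ _)) (Nat.cast_nonneg _)

theorem card_filter_add_notMem_le [Add E] [IsRightCancelAdd E] {F F' : Finset E} {a : E}
    (hF : ∀ b ∈ F, b + a ∈ F') :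
    (F.filter fun b => b + a ∉ F).card ≤ (F' \ F).card :=
  Finset.card_le_card_of_injOn (· + a)
    (fun b hb => Finset.mem_sdiff.2 ((Finset.mem_filter.1 hb).imp_left (hF b)))
    (add_left_injective a).injOn

theorem exists_one_sub_le_overlap [AddCancelCommMonoid E] (s : Finset E) {ε : ℝ} (hε : 0 < ε) :
    ∃ F : Finset E, ∀ a ∈ s, 1 - ε ≤ overlap F a := by
  obtain ⟨n, hn⟩ := exists_succ_le_mul_of_le_pow (u := fun n => ((n • insert 0 s).card : ℝ))
    (fun n => by exact_mod_cast card_nsmul_insert_zero_le s n) (by simp) (lt_add_of_pos_right 1 hε)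
  refine ⟨n • insert 0 s, fun a ha => ?_⟩
  set F := n • insert 0 s
  set F' := (n + 1) • insert 0 s
  have hFpos : 0 < (F.card : ℝ) :=
    Nat.cast_pos.2 (Finset.card_pos.2 (Finset.insert_nonempty _ _).nsmul)
  have hadd {b : E} (hb : b ∈ F) {c : E} (hc : c ∈ insert 0 s) : b + c ∈ F' := by
    rw [show F' = F + insert 0 s from succ_nsmul _ _]
    exact Finset.add_mem_add hb hc
  have hsub : F ⊆ F' := fun b hb => add_zero b ▸ hadd hb (Finset.mem_insert_self 0 s)
  have hout : ((F.filter fun b => b + a ∉ F).card : ℝ) ≤ F'.card - F.card := by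
    rw [← Nat.cast_sub (Finset.card_le_card hsub), ← Finset.card_sdiff_of_subset hsub]
    exact Nat.cast_le.2
      (card_filter_add_notMem_le fun b hb => hadd hb (Finset.mem_insert_of_mem ha))
  have hsplit : ((F.filter fun b => b + a ∈ F).card + (F.filter fun b => b + a ∉ F).card : ℝ) =
      F.card := by
    exact_mod_cast Finset.card_filter_add_card_filter_not (s := F) _
  rw [overlap, le_div_iff₀ hFpos]
  linarith

theorem exists_tendsto_overlap (E : Type*) [DecidableEq E] [AddCancelCommMonoid E] :
    ∃ F : Finset E × ℕ → Finset E, ∀ a, Tendsto (fun p => overlap (F p) a) atTop (nhds 1) := by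
  choose F hF using fun p : Finset E × ℕ =>
    exists_one_sub_le_overlap p.1 (Nat.one_div_pos_of_nat (α := ℝ) (n := p.2))
  refine ⟨F, fun a => ?_⟩
  have hlower : Tendsto (fun p : Finset E × ℕ => 1 - 1 / ((p.2 : ℝ) + 1)) atTop (nhds 1) := by
    rw [← prod_atTop_atTop_eq]
    simpa using (tendsto_one_div_add_atTop_nhds_zero_nat.comp tendsto_snd).const_sub (1 : ℝ)
  refine tendsto_of_tendsto_of_tendsto_of_le_of_le' hlower tendsto_const_nhds ?_
    (Eventually.of_forall fun p => overlap_le_one _ _)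
  filter_upwards [eventually_ge_atTop (({a}, 0) : Finset E × ℕ)] with p hp
  exact hF p a (hp.1 (Finset.mem_singleton_self a))

end AlmostInvariant

/-! ### Bochner–Fejér approximation -/

section BochnerFejer

variable {k : ℕ}

/-- The Bohr–Fourier coefficient at `lam`, as a functional on almost periodic functions. -/
def bohrCoeffCLM (k : ℕ) (lam : Fin k → ℝ) : apClosure k ⊤ →L[ℂ] ℂ :=
  (bohrMean k).comp (ContinuousLinearMap.mul ℂ (apClosure k ⊤) (apClosureExp ⊤ ⟨-lam, trivial⟩))

theorem bohrCoeffCLM_apply (lam : Fin k → ℝ) (f : apClosure k ⊤) :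
    bohrCoeffCLM k lam f = bohrMean k (apClosureExp ⊤ ⟨-lam, trivial⟩ * f) := rfl

theorem bohrCoeffCLM_eq_bohrCoeff (lam : Fin k → ℝ) (f : apClosure k ⊤) :
    bohrCoeffCLM k lam f = bohrCoeff k f lam :=
  (bohrCoeff_eq_bohrMean f lam).symm

theorem apClosureExp_add (Δ : AddSubmonoid (Fin k → ℝ)) (a b : Δ) :
    apClosureExp Δ (a + b) = apClosureExp Δ a * apClosureExp Δ b :=
  Subtype.ext (apExp_add _ _)

theorem bohrCoeffCLM_apClosureExp (lam : Fin k → ℝ) (a : (⊤ : AddSubmonoid (Fin k → ℝ))) :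
    bohrCoeffCLM k lam (apClosureExp ⊤ a) = if lam = a then 1 else 0 := by
  rw [bohrCoeffCLM_apply, ← apClosureExp_add, bohrMean_apClosureExp]
  exact if_congr neg_add_eq_zero rfl rfl

/-- The Bochner–Fejér sum attached to a finite set `F` of frequencies: mean convolution with the
nonnegative kernel `|F|⁻¹ |∑_{a ∈ F} e_a|²`. -/
def fejerSum (F : Finset (Fin k → ℝ)) : apClosure k ⊤ →L[ℂ] APB k :=
  (F.card : ℂ)⁻¹ • ∑ a ∈ F, ∑ b ∈ F, (bohrCoeffCLM k (a - b)).smulRight (apExp k (a - b))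

theorem fejerSum_apply (F : Finset (Fin k → ℝ)) (f : apClosure k ⊤) :
    fejerSum F f =
      (F.card : ℂ)⁻¹ • ∑ a ∈ F, ∑ b ∈ F, bohrCoeffCLM k (a - b) f • apExp k (a - b) := by
  simp only [fejerSum, _root_.smul_apply, _root_.sum_apply,
    ContinuousLinearMap.smulRight_apply]

theorem fejerSum_apClosureExp (F : Finset (Fin k → ℝ)) (lam : (⊤ : AddSubmonoid (Fin k → ℝ))) :
    fejerSum F (apClosureExp ⊤ lam) = (overlap F (lam : Fin k → ℝ) : ℂ) • apExp k lam := by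
  have hinner (b : Fin k → ℝ) :
      (∑ a ∈ F, bohrCoeffCLM k (a - b) (apClosureExp ⊤ lam) • apExp k (a - b)) =
        if b + lam ∈ F then apExp k lam else 0 := by
    simp only [bohrCoeffCLM_apClosureExp, sub_eq_iff_eq_add', ite_smul, one_smul, zero_smul]
    rw [Finset.sum_ite_eq', add_sub_cancel_left]
  rw [fejerSum_apply, Finset.sum_comm]
  simp only [hinner]
  rw [← Finset.sum_filter, Finset.sum_const, ← Nat.cast_smul_eq_nsmul ℂ, smul_smul, overlap,
    Complex.ofReal_div, Complex.ofReal_natCast, Complex.ofReal_natCast, div_eq_inv_mul]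

/-- The kernel `y ↦ |F|⁻¹ |∑_{a ∈ F} e_a(x - y)|²` of `fejerSum F` at the point `x`, expanded as
an exponential polynomial in `y`. -/
def fejerKernel (F : Finset (Fin k → ℝ)) (x : Fin k → ℝ) : apClosure k ⊤ :=
  (F.card : ℂ)⁻¹ •
    ∑ a ∈ F, ∑ b ∈ F, apExp k (a - b) x • apClosureExp ⊤ ⟨-(a - b), trivial⟩

theorem apExp_sub_apply (a b x : Fin k → ℝ) :
    apExp k (a - b) x = apExp k a x * starRingEnd ℂ (apExp k b x) := by
  simp only [apExp_apply, ← Complex.exp_conj, ← Complex.exp_add, map_mul, Complex.conj_I,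
    Complex.conj_ofReal, Pi.sub_apply, sub_mul, Finset.sum_sub_distrib, Complex.ofReal_sub]
  ring_nf

theorem apExp_apply_mul_apExp_neg_apply (lam x y : Fin k → ℝ) :
    apExp k lam x * apExp k (-lam) y = apExp k lam (x - y) := by
  simp only [apExp_apply, ← Complex.exp_add, Pi.neg_apply, Pi.sub_apply, mul_sub, neg_mul,
    Finset.sum_sub_distrib, Finset.sum_neg_distrib, Complex.ofReal_sub, Complex.ofReal_neg]
  ring_nf

theorem fejerKernel_apply (F : Finset (Fin k → ℝ)) (x y : Fin k → ℝ) :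
    (fejerKernel F x : APB k) y =
      (((F.card : ℝ)⁻¹ * ‖∑ a ∈ F, apExp k a (x - y)‖ ^ 2 : ℝ) : ℂ) := by
  have hsq : ((‖∑ a ∈ F, apExp k a (x - y)‖ ^ 2 : ℝ) : ℂ) =
      ∑ a ∈ F, ∑ b ∈ F, apExp k (a - b) (x - y) := by
    rw [Complex.ofReal_pow, ← Complex.mul_conj', map_sum, Finset.sum_mul_sum]
    simp only [apExp_sub_apply]
  rw [Complex.ofReal_mul, hsq, Complex.ofReal_inv, Complex.ofReal_natCast]
  simp only [← apExp_apply_mul_apExp_neg_apply]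
  simp [fejerKernel, apClosureExp]

theorem fejerSum_apply_eq_bohrMean (F : Finset (Fin k → ℝ)) (f : apClosure k ⊤) (x : Fin k → ℝ) :
    fejerSum F f x = bohrMean k (fejerKernel F x * f) := by
  rw [fejerSum_apply, fejerKernel, smul_mul_assoc, map_smul, Finset.sum_mul, map_sum]
  simp only [Finset.sum_mul, map_sum, smul_mul_assoc, map_smul, ← bohrCoeffCLM_apply,
    BoundedContinuousFunction.smul_apply, BoundedContinuousFunction.sum_apply, smul_eq_mul,
    mul_comm (apExp k _ x)]

theorem norm_fejerSum_le (F : Finset (Fin k → ℝ)) (f : apClosure k ⊤) : ‖fejerSum F f‖ ≤ ‖f‖ := by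
  refine (BoundedContinuousFunction.norm_le (norm_nonneg _)).2 fun x => ?_
  have hdom (y : Fin k → ℝ) : ‖((fejerKernel F x * f : apClosure k ⊤) : APB k) y‖ ≤
      ((((‖f‖ : ℂ) • fejerKernel F x : apClosure k ⊤) : APB k) y).re := by
    have hker := fejerKernel_apply F x y
    set K : ℝ := (F.card : ℝ)⁻¹ * ‖∑ a ∈ F, apExp k a (x - y)‖ ^ 2
    have hK : 0 ≤ K := by positivity
    calc ‖((fejerKernel F x * f : apClosure k ⊤) : APB k) y‖ = K * ‖(f : APB k) y‖ := by
          rw [MulMemClass.coe_mul, BoundedContinuousFunction.mul_apply, norm_mul, hker,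
            Complex.norm_real, Real.norm_of_nonneg hK]
      _ ≤ K * ‖f‖ := by gcongr; exact (f : APB k).norm_coe_le_norm y
      _ = _ := by
          rw [SetLike.val_smul, BoundedContinuousFunction.smul_apply, hker, smul_eq_mul,
            ← Complex.ofReal_mul, Complex.ofReal_re, mul_comm]
  have hmean : bohrMean k (fejerKernel F x) = overlap F 0 := by
    have hone : apClosureExp (⊤ : AddSubmonoid (Fin k → ℝ)) 0 = 1 := Subtype.ext apExp_zero
    rw [← mul_one (fejerKernel F x), ← fejerSum_apply_eq_bohrMean, ← hone, fejerSum_apClosureExp]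
    simp
  rw [fejerSum_apply_eq_bohrMean]
  refine (norm_bohrMean_le_re hdom).trans ?_
  rw [map_smul, hmean, smul_eq_mul, ← Complex.ofReal_mul, Complex.ofReal_re]
  exact mul_le_of_le_one_right (norm_nonneg f) (overlap_le_one F 0)

theorem exists_tendsto_fejerSum (k : ℕ) : ∃ F : Finset (Fin k → ℝ) × ℕ → Finset (Fin k → ℝ),
    ∀ f : apClosure k ⊤, Tendsto (fun p => fejerSum (F p) f) atTop (nhds (f : APB k)) := by
  obtain ⟨F, hF⟩ := exists_tendsto_overlap (Fin k → ℝ)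
  have hexp (a : (⊤ : AddSubmonoid (Fin k → ℝ))) :
      Tendsto (fun p => fejerSum (F p) (apClosureExp ⊤ a)) atTop (nhds (apExp k a)) := by
    simp only [fejerSum_apClosureExp]
    simpa using ((Complex.continuous_ofReal.tendsto 1).comp (hF a)).smul_const (apExp k a.1)
  have hcontr (p) (f : apClosure k ⊤) : ‖(fejerSum (F p)).toLinearMap f‖ ≤ ‖f‖ :=
    norm_fejerSum_le _ f
  obtain ⟨L, hL⟩ := exists_continuousLinearMap_tendsto hcontr (dense_span_apClosureExp ⊤)
    (by rintro _ ⟨a, rfl⟩; exact ⟨_, hexp a⟩)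
  let incl : apClosure k ⊤ →L[ℂ] APB k := ⟨(apClosure k ⊤).val.toLinearMap, continuous_subtype_val⟩
  have hincl : L = incl := by
    refine ContinuousLinearMap.ext_on (dense_span_apClosureExp ⊤) ?_
    rintro _ ⟨a, rfl⟩
    exact tendsto_nhds_unique (hL _) (hexp a)
  exact ⟨F, fun f => show Tendsto _ _ (nhds (incl f)) from hincl ▸ hL f⟩

theorem bohrCoeff_eq_zero_of_mem_topologicalClosure_span {Δ : Set (Fin k → ℝ)}
    {f : apClosure k ⊤} (hf : (f : APB k) ∈ (Submodule.span ℂ (apExp k '' Δ)).topologicalClosure)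
    {lam : Fin k → ℝ} (hlam : lam ∉ Δ) : bohrCoeff k f lam = 0 := by
  let K : Submodule ℂ (APB k) :=
    (LinearMap.ker (bohrCoeffCLM k lam).toLinearMap).map (apClosure k ⊤).val.toLinearMap
  have hclosed : IsClosed (K : Set (APB k)) :=
    (Subalgebra.isClosed_topologicalClosure _).isClosedEmbedding_subtypeVal.isClosedMap _
      (bohrCoeffCLM k lam).isClosed_ker
  have hspan : Submodule.span ℂ (apExp k '' Δ) ≤ K := by
    refine Submodule.span_le.2 ?_
    rintro _ ⟨a, ha, rfl⟩
    refine ⟨apClosureExp ⊤ ⟨a, trivial⟩, ?_, rfl⟩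
    exact (bohrCoeffCLM_apClosureExp _ _).trans (if_neg fun h : lam = a => hlam (h ▸ ha))
  obtain ⟨g, hg, hgf⟩ := Submodule.topologicalClosure_minimal _ hspan hclosed hf
  rw [← bohrCoeffCLM_eq_bohrCoeff, ← Subtype.ext hgf]
  exact hg

theorem APmem_iff_mem_topologicalClosure_span {Δ : Set (Fin k → ℝ)} {f : APB k} :
    APmem k Δ f ↔ f ∈ (Submodule.span ℂ (apExp k '' Δ)).topologicalClosure := by
  rw [APmem, APalg_eq_apClosure_top]
  constructor
  · rintro ⟨hf, hspec⟩
    obtain ⟨F, hF⟩ := exists_tendsto_fejerSum k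
    refine (Submodule.isClosed_topologicalClosure _).mem_of_tendsto (hF ⟨f, hf⟩)
      (Eventually.of_forall fun p => Submodule.le_topologicalClosure _ ?_)
    rw [fejerSum_apply]
    refine Submodule.smul_mem _ _ (Submodule.sum_mem _ fun a _ => Submodule.sum_mem _ fun b _ => ?_)
    rw [bohrCoeffCLM_eq_bohrCoeff]
    by_cases hab : bohrCoeff k f (a - b) = 0
    · simp only [hab, zero_smul, Submodule.zero_mem]
    · exact Submodule.smul_mem _ _ (Submodule.subset_span ⟨_, hspec hab, rfl⟩)
  · intro hf
    have hle : apExp k '' Δ ⊆ apExp k '' (⊤ : AddSubmonoid (Fin k → ℝ)) :=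
      Set.image_mono (Set.subset_univ Δ)
    have htop : f ∈ apClosure k ⊤ := mem_apClosure_iff.2 (closure_mono (Submodule.span_mono hle) hf)
    refine ⟨htop, fun lam hlam => by_contra fun hΔ => hlam ?_⟩
    exact bohrCoeff_eq_zero_of_mem_topologicalClosure_span (f := ⟨f, htop⟩) hf hΔ

theorem APmem_iff_mem_apClosure {Δ : AddSubmonoid (Fin k → ℝ)} {f : APB k} :
    APmem k Δ f ↔ f ∈ apClosure k Δ :=
  APmem_iff_mem_topologicalClosure_span.trans mem_apClosure_iff.symm

end BochnerFejer

/-! ### Completion of rectangular matrices to invertible ones -/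

section Completion

variable {m n A : Type*} [Fintype n] [DecidableEq n] {e : m ↪ n}

/-- A matrix `M` is completable along the embedding `e` of its row indices into its column indices
if it consists of the rows of some invertible square matrix with indices in the range of `e`. -/
def IsCompletable [CommRing A] (e : m ↪ n) (M : Matrix m n A) : Prop :=
  ∃ N : Matrix n n A, IsUnit N ∧ N.submatrix e id = M

theorem IsCompletable.mul_isUnit [CommRing A] {M : Matrix m n A} (hM : IsCompletable e M)
    {U : Matrix n n A} (hU : IsUnit U) : IsCompletable e (M * U) := by
  obtain ⟨N, hN, rfl⟩ := hM
  exact ⟨N * U, hN.mul hU, Matrix.submatrix_mul _ _ _ _ _ Function.bijective_id⟩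

theorem isCompletable_mul_isUnit_iff [CommRing A] {M : Matrix m n A} {U : Matrix n n A}
    (hU : IsUnit U) : IsCompletable e (M * U) ↔ IsCompletable e M := by
  refine ⟨fun h => ?_, fun h => h.mul_isUnit hU⟩
  obtain ⟨U, rfl⟩ := hU
  simpa only [Matrix.mul_assoc, Units.mul_inv, Matrix.mul_one] using h.mul_isUnit U⁻¹.isUnit

theorem IsCompletable.map {B : Type*} [CommRing A] [CommRing B] {M : Matrix m n A}
    (hM : IsCompletable e M) (f : A →+* B) : IsCompletable e (M.map f) := by
  obtain ⟨N, hN, rfl⟩ := hM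
  exact ⟨N.map f, hN.map f.mapMatrix, rfl⟩

theorem isCompletable_of_linearIndependent_row {K : Type*} [Field K] {C : Matrix m n K}
    (hC : LinearIndependent K C.row) : IsCompletable e C := by
  have hrange := hC.linearIndepOn_id
  let b := Module.Basis.extend hrange
  have : Fintype (hrange.extend (Set.subset_univ _)) := FiniteDimensional.fintypeBasisIndex b
  have hcard : Fintype.card n = (hrange.extend (Set.subset_univ _)).toFinset.card := by
    rw [Set.toFinset_card, ← Module.finrank_eq_card_basis b, Module.finrank_fintype_fun_eq_card]
  have hext (i : m) : Function.extend e C.row 0 (e i) = C.row i := e.injective.extend_apply ..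
  obtain ⟨g, hg⟩ := Set.MapsTo.exists_equiv_extend_of_card_eq hcard
    (s := Set.range e) (f := Function.extend e C.row 0)
    (by
      rintro _ ⟨i, rfl⟩
      rw [hext, Set.coe_toFinset]
      exact hrange.subset_extend _ ⟨i, rfl⟩)
    (by
      rintro _ ⟨i, rfl⟩ _ ⟨j, rfl⟩ hij
      rw [hext, hext] at hij
      rw [hC.injective hij])
  let b' := b.reindex (g.trans (Equiv.subtypeEquivRight fun _ => Set.mem_toFinset)).symm
  refine ⟨Matrix.of b', Matrix.linearIndependent_rows_iff_isUnit.1 b'.linearIndependent, ?_⟩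
  ext i j
  simpa [b', b] using congrFun ((hg (e i) ⟨i, rfl⟩).trans (hext i)) j

theorem isCompletable_map_algebraMap {K : Type*} [Field K] [CommRing A] [Nontrivial A]
    [Algebra K A] [DecidableEq m] {C : Matrix m n K} {R : Matrix n m A}
    (h : C.map (algebraMap K A) * R = 1) : IsCompletable e (C.map (algebraMap K A)) := by
  have : Fintype m := Fintype.ofInjective e e.injective
  have hrow : LinearIndependent K C.row := by
    refine Matrix.vecMul_injective_iff.1 fun v w hvw => ?_
    have hcancel (u : m → K) :
        Matrix.vecMul (algebraMap K A ∘ Matrix.vecMul u C) R = algebraMap K A ∘ u := by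
      have hmap : algebraMap K A ∘ Matrix.vecMul u C =
          Matrix.vecMul (algebraMap K A ∘ u) (C.map (algebraMap K A)) :=
        funext (RingHom.map_vecMul (algebraMap K A) C u)
      rw [hmap, Matrix.vecMul_vecMul, h, Matrix.vecMul_one]
    have hvw' := congrArg (fun u => Matrix.vecMul (algebraMap K A ∘ u) R) hvw
    exact (FaithfulSMul.algebraMap_injective K A).comp_left
      ((hcancel v).symm.trans (hvw'.trans (hcancel w)))
  exact (isCompletable_of_linearIndependent_row hrow).map _

end Completion

section TopologicalCompletion

variable {m n A : Type*} [DecidableEq m] [Fintype n] [DecidableEq n] {e : m ↪ n}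
  [NormedCommRing A] [CompleteSpace A]

theorem isOpen_setOf_isUnit_matrix : IsOpen {X : Matrix n n A | IsUnit X} := by
  simp only [Matrix.isUnit_iff_isUnit_det]
  exact Units.isOpen.preimage (Continuous.matrix_det continuous_id)

theorem exists_isUnit_matrix_of_norm_sub_one_lt :
    ∃ δ > 0, ∀ X : Matrix n n A, (∀ i j, ‖(X - 1) i j‖ < δ) → IsUnit X := by
  have hmem : {X : Matrix n n A | IsUnit X} ∈ nhds (1 : Matrix n n A) :=
    isOpen_setOf_isUnit_matrix.mem_nhds isUnit_one
  obtain ⟨δ, hδ, hball⟩ := (Metric.nhds_basis_ball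
    (x := (fun i j => (1 : Matrix n n A) i j : n → n → A))).mem_iff.1 hmem
  refine ⟨δ, hδ, fun X hX => hball ?_⟩
  exact (dist_pi_lt_iff hδ).2 fun i => (dist_pi_lt_iff hδ).2 fun j =>
    (dist_eq_norm (X i j) _).trans_lt (hX i j)

theorem eventually_isCompletable_iff {M : Matrix m n A} {R : Matrix n m A} (h : M * R = 1) :
    ∀ᶠ N in nhds M, IsCompletable e N ↔ IsCompletable e M := by
  have : Fintype m := Fintype.ofInjective e e.injective
  have hcont : Continuous fun N : Matrix m n A => 1 + R * (N - M) := by fun_prop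
  have hmem := hcont.continuousAt.preimage_mem_nhds (x := M)
    (isOpen_setOf_isUnit_matrix.mem_nhds (by simp))
  filter_upwards [hmem] with N hN
  have hNM : N = M * (1 + R * (N - M)) := by
    rw [Matrix.mul_add, ← Matrix.mul_assoc, h, Matrix.mul_one, Matrix.one_mul, add_sub_cancel]
  rw [hNM]
  exact isCompletable_mul_isUnit_iff hN

theorem isCompletable_iff_of_continuous {X : Type*} [TopologicalSpace X] [PreconnectedSpace X]
    {f : X → Matrix m n A} (hf : Continuous f) (hinv : ∀ x, ∃ R : Matrix n m A, f x * R = 1)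
    (x y : X) : IsCompletable e (f x) ↔ IsCompletable e (f y) := by
  have hlocal : IsLocallyConstant fun x => IsCompletable e (f x) := by
    refine IsLocallyConstant.iff_eventually_eq _ |>.2 fun x => ?_
    obtain ⟨R, hR⟩ := hinv x
    exact (hf.continuousAt.eventually (eventually_isCompletable_iff hR)).mono fun _ => propext
  exact iff_of_eq (hlocal.apply_eq_of_preconnectedSpace x y)

end TopologicalCompletion

/-! ### Dilations of exponential polynomials -/

section Dilation

theorem exists_forall_dotProduct_pos {ι : Type*} [Fintype ι] {Λ : Set (ι → ℝ)} (hΛ : Λ.Finite)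
    (h0 : (0 : ι → ℝ) ∉ convexHull ℝ Λ) : ∃ v : ι → ℝ, ∀ a ∈ Λ, 0 < a ⬝ᵥ v := by
  classical
  obtain ⟨f, u, hu, hf⟩ := geometric_hahn_banach_point_closed (convex_convexHull ℝ _)
    (hΛ.isClosed_convexHull ℝ) h0
  rw [map_zero] at hu
  refine ⟨(dotProductEquiv ℝ ι).symm f.toLinearMap, fun a ha => ?_⟩
  have hfa : a ⬝ᵥ (dotProductEquiv ℝ ι).symm f.toLinearMap = f a := by
    rw [dotProduct_comm, ← dotProductEquiv_apply_apply, LinearEquiv.apply_symm_apply]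
    rfl
  exact hfa ▸ hu.trans (hf a (subset_convexHull ℝ _ ha))

theorem norm_sum_mul_exp_neg_le {ι : Type*} {s : Finset ι} {c : ι → ℂ} {μ : ι → ℝ}
    (hμ : ∀ i ∈ s, 0 ≤ μ i) {C : ℝ}
    (hC : ∀ y : ℝ, ‖∑ i ∈ s, c i * Complex.exp (-(y * Complex.I * μ i))‖ ≤ C)
    {z : ℂ} (hz : 0 ≤ z.re) : ‖∑ i ∈ s, c i * Complex.exp (-(z * μ i))‖ ≤ C := by
  have hbounded (w : ℂ) (hw : 0 ≤ w.re) :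
      ‖∑ i ∈ s, c i * Complex.exp (-(w * μ i))‖ ≤ ∑ i ∈ s, ‖c i‖ := by
    refine norm_sum_le_of_le _ fun i hi => ?_
    rw [norm_mul, Complex.norm_exp]
    refine mul_le_of_le_one_right (norm_nonneg _) (Real.exp_le_one_iff.2 ?_)
    simpa using mul_nonneg hw (hμ i hi)
  refine PhragmenLindelof.right_half_plane_of_bounded_on_real
    (f := fun w => ∑ i ∈ s, c i * Complex.exp (-(w * μ i))) ?_ ⟨0, by norm_num, 0, ?_⟩ ?_ hC hz
  · exact Differentiable.diffContOnCl (by fun_prop)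
  · refine Asymptotics.IsBigO.of_bound (∑ i ∈ s, ‖c i‖) ?_
    filter_upwards [mem_inf_of_right (mem_principal_self _)] with w hw
    simpa using hbounded w (le_of_lt hw)
  · refine isBoundedUnder_of_eventually_le (a := ∑ i ∈ s, ‖c i‖) ?_
    filter_upwards [eventually_ge_atTop 0] with t ht using hbounded t (by simpa using ht)

variable {k : ℕ} (Δ : AddSubmonoid (Fin k → ℝ)) (v : Fin k → ℝ)

/-- The frequencies in `Δ` which vanish or have a positive inner product with `v`. -/
def positiveFrequencies : AddSubmonoid (Fin k → ℝ) where
  carrier := {a | a ∈ Δ ∧ (a = 0 ∨ 0 < a ⬝ᵥ v)}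
  zero_mem' := ⟨Δ.zero_mem, Or.inl rfl⟩
  add_mem' := by
    rintro a b ⟨ha, rfl | hav⟩ ⟨hb, rfl | hbv⟩
    · simp
    · simpa using ⟨hb, Or.inr hbv⟩
    · simpa using ⟨ha, Or.inr hav⟩
    · exact ⟨Δ.add_mem ha hb, Or.inr (by simpa only [add_dotProduct] using add_pos hav hbv)⟩

variable {Δ v}

theorem positiveFrequencies_le : positiveFrequencies Δ v ≤ Δ := fun _ ha => ha.1

theorem dotProduct_nonneg_of_mem_positiveFrequencies {a : Fin k → ℝ}
    (ha : a ∈ positiveFrequencies Δ v) : 0 ≤ a ⬝ᵥ v := by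
  rcases ha.2 with rfl | hav
  · rw [zero_dotProduct]
  · exact hav.le

variable (Δ v)

/-- The homomorphism from formal exponential polynomials to `apClosure k Δ` which sends `e_a` to
`s ^ ⟨a, v⟩ • e_a`. For `s = exp (-y)` it is the translation by the imaginary vector `i y v`. -/
def dilation (s : unitInterval) :
    AddMonoidAlgebra ℂ (positiveFrequencies Δ v) →ₐ[ℂ] apClosure k Δ :=
  AddMonoidAlgebra.lift ℂ (apClosure k Δ) (positiveFrequencies Δ v)
    { toFun a := (((s : ℝ) ^ ((a.toAdd : Fin k → ℝ) ⬝ᵥ v) : ℝ) : ℂ) •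
        apClosureExp Δ (AddSubmonoid.inclusion positiveFrequencies_le a.toAdd)
      map_one' := by
        rw [toAdd_one, AddSubmonoid.coe_zero, zero_dotProduct, Real.rpow_zero, Complex.ofReal_one,
          one_smul, map_zero]
        exact Subtype.ext apExp_zero
      map_mul' a b := by
        have hrpow := Real.rpow_add_of_nonneg s.2.1
          (dotProduct_nonneg_of_mem_positiveFrequencies a.toAdd.2)
          (dotProduct_nonneg_of_mem_positiveFrequencies b.toAdd.2)
        rw [toAdd_mul, AddSubmonoid.coe_add, add_dotProduct, hrpow, Complex.ofReal_mul, map_add,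
          apClosureExp_add, smul_mul_smul_comm] }

theorem dilation_single (s : unitInterval) (a : positiveFrequencies Δ v) (c : ℂ) :
    dilation Δ v s (AddMonoidAlgebra.single a c) =
      c • (((s : ℝ) ^ ((a : Fin k → ℝ) ⬝ᵥ v) : ℝ) : ℂ) •
        apClosureExp Δ (AddSubmonoid.inclusion positiveFrequencies_le a) :=
  AddMonoidAlgebra.lift_single ..

theorem dilation_apply (s : unitInterval) (p : AddMonoidAlgebra ℂ (positiveFrequencies Δ v))
    (x : Fin k → ℝ) :
    (dilation Δ v s p : APB k) x = ∑ a ∈ p.coeff.support,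
      p.coeff a * apExp k a x * (((s : ℝ) ^ ((a : Fin k → ℝ) ⬝ᵥ v) : ℝ) : ℂ) := by
  rw [dilation, AddMonoidAlgebra.lift_apply, Finsupp.sum, AddSubmonoidClass.coe_finsetSum,
    BoundedContinuousFunction.coe_sum, Finset.sum_apply]
  refine Finset.sum_congr rfl fun a _ => ?_
  change p.coeff a * ((((s : ℝ) ^ ((a : Fin k → ℝ) ⬝ᵥ v) : ℝ) : ℂ) * apExp k a x) = _
  ring

theorem continuous_dilation (p : AddMonoidAlgebra ℂ (positiveFrequencies Δ v)) :
    Continuous fun s => dilation Δ v s p := by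
  induction p using AddMonoidAlgebra.induction_on with
  | of a =>
    have hrpow : Continuous fun s : unitInterval => (s : ℝ) ^ ((a : Fin k → ℝ) ⬝ᵥ v) :=
      (Real.continuous_rpow_const (dotProduct_nonneg_of_mem_positiveFrequencies a.2)).comp
        continuous_subtype_val
    simp only [AddMonoidAlgebra.of_apply, dilation_single]
    fun_prop
  | add p q hp hq =>
    simp only [map_add]
    exact hp.add hq
  | smul c p hp =>
    simp only [map_smul]
    exact hp.const_smul c

theorem dilation_zero_mem_bot (p : AddMonoidAlgebra ℂ (positiveFrequencies Δ v)) :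
    dilation Δ v 0 p ∈ (⊥ : Subalgebra ℂ (apClosure k Δ)) := by
  induction p using AddMonoidAlgebra.induction_on with
  | of a =>
    rcases a.2.2 with h0 | hav
    · obtain rfl : a = 0 := Subtype.ext h0
      exact (map_one (dilation Δ v 0)).symm ▸ one_mem _
    · rw [AddMonoidAlgebra.of_apply, dilation_single, toAdd_ofAdd, Set.Icc.coe_zero,
        Real.zero_rpow hav.ne', Complex.ofReal_zero, zero_smul, smul_zero]
      exact zero_mem _
  | add p q hp hq => simpa only [map_add] using add_mem hp hq
  | smul c p hp => simpa only [map_smul] using Subalgebra.smul_mem _ hp c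

theorem apExp_apply_sub_smul (a x v : Fin k → ℝ) (y : ℝ) :
    apExp k a (x - y • v) = apExp k a x * Complex.exp (-(y * Complex.I * (a ⬝ᵥ v : ℝ))) := by
  rw [apExp_apply, apExp_apply, ← Complex.exp_add]
  congr 1
  change Complex.I * ((a ⬝ᵥ (x - y • v) : ℝ) : ℂ) = Complex.I * ((a ⬝ᵥ x : ℝ) : ℂ) + _
  rw [dotProduct_sub, dotProduct_smul, smul_eq_mul]
  push_cast
  ring

theorem norm_dilation_le (s : unitInterval) (p : AddMonoidAlgebra ℂ (positiveFrequencies Δ v)) :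
    ‖dilation Δ v s p‖ ≤ ‖dilation Δ v 1 p‖ := by
  refine (dense_compl_singleton (0 : unitInterval)).induction (fun s hs => ?_)
    (isClosed_le (continuous_dilation Δ v p).norm continuous_const) s
  have hs0 : 0 < (s : ℝ) := unitInterval.pos_iff_ne_zero.2 hs
  refine (BoundedContinuousFunction.norm_le (norm_nonneg _)).2 fun x => ?_
  have hexp : (dilation Δ v s p : APB k) x = ∑ a ∈ p.coeff.support, p.coeff a * apExp k a x *
      Complex.exp (-((-Real.log s : ℝ) * ((a : Fin k → ℝ) ⬝ᵥ v : ℝ))) := by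
    simp [dilation_apply, Real.rpow_def_of_pos hs0]
  refine (congrArg norm hexp).trans_le ?_
  refine norm_sum_mul_exp_neg_le
    (fun a _ => dotProduct_nonneg_of_mem_positiveFrequencies a.2) (fun y => ?_)
    (by simpa using Real.log_nonpos s.2.1 s.2.2)
  refine le_of_eq_of_le ?_ ((dilation Δ v 1 p : APB k).norm_coe_le_norm (x - y • v))
  simp [dilation_apply, apExp_apply_sub_smul, mul_assoc]

variable {Δ}

theorem exists_forall_mem_range_dilation_one
    (hΔ : (0 : Fin k → ℝ) ∉ convexHull ℝ ((Δ : Set (Fin k → ℝ)) \ {0})) {ι : Type*} [Finite ι]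
    {f : ι → apClosure k Δ} (hf : ∀ i, f i ∈ Submodule.span ℂ (Set.range (apClosureExp Δ))) :
    ∃ v, ∀ i, f i ∈ (dilation Δ v 1).range := by
  simp only [Finsupp.mem_span_range_iff_exists_finsupp] at hf
  choose c hc using hf
  let Λ : Set (Fin k → ℝ) := ⋃ i, (↑) '' ((c i).support : Set Δ)
  have hΛ : Λ.Finite := Set.finite_iUnion fun i => (c i).support.finite_toSet.image _
  have hsub : Λ ⊆ Δ := by
    refine Set.iUnion_subset fun i => ?_
    rintro _ ⟨a, -, rfl⟩
    exact a.2
  obtain ⟨v, hv⟩ := exists_forall_dotProduct_pos (hΛ.sdiff (t := {0}))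
    fun h => hΔ (convexHull_mono (Set.sdiff_subset_sdiff_left hsub) h)
  refine ⟨v, fun i => ?_⟩
  rw [← hc i]
  refine Subalgebra.sum_mem _ fun a ha => Subalgebra.smul_mem _ ?_ _
  have hav : (a : Fin k → ℝ) ∈ positiveFrequencies Δ v :=
    ⟨a.2, or_iff_not_imp_left.2 fun h0 => hv a ⟨Set.mem_iUnion.2 ⟨i, a, ha, rfl⟩, h0⟩⟩
  refine ⟨AddMonoidAlgebra.single ⟨a, hav⟩ 1, ?_⟩
  exact (dilation_single ..).trans (by simp [AddSubmonoid.inclusion])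

end Dilation

/-! ### Completion of right invertible almost periodic matrices -/

section AlmostPeriodicCompletion

variable {k : ℕ} {Δ : AddSubmonoid (Fin k → ℝ)} {m n : Type*} [DecidableEq m]
  [Fintype n]

theorem dense_setOf_matrix_span_apClosureExp (Δ : AddSubmonoid (Fin k → ℝ)) (m n : Type*) :
    Dense {M : Matrix m n (apClosure k Δ) |
      ∀ i j, M i j ∈ Submodule.span ℂ (Set.range (apClosureExp Δ))} := by
  refine (dense_pi (Set.univ : Set m) fun _ _ => dense_pi (Set.univ : Set n) fun _ _ =>
    dense_span_apClosureExp Δ).mono fun M hM i j => ?_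
  exact hM i trivial j trivial

instance (Δ : AddSubmonoid (Fin k → ℝ)) : Nontrivial (apClosure k Δ) :=
  ⟨0, 1, fun h => zero_ne_one (α := ℂ) (DFunLike.congr_fun (congrArg Subtype.val h) 0)⟩

theorem exists_map_dilation_mul_eq_one [Fintype m] {v : Fin k → ℝ} {δ : ℝ}
    (hδ : ∀ X : Matrix m m (apClosure k Δ), (∀ i j, ‖(X - 1) i j‖ < δ) → IsUnit X)
    {p : Matrix m n (AddMonoidAlgebra ℂ (positiveFrequencies Δ v))}
    {q : Matrix n m (AddMonoidAlgebra ℂ (positiveFrequencies Δ v))}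
    (hpq : ∀ i j,
      ‖(p.map (dilation Δ v 1) * q.map (dilation Δ v 1) - 1 : Matrix m m (apClosure k Δ)) i j‖ < δ)
    (s : unitInterval) : ∃ R : Matrix n m (apClosure k Δ), p.map (dilation Δ v s) * R = 1 := by
  have hmap (t : unitInterval) : p.map (dilation Δ v t) * q.map (dilation Δ v t) - 1 =
      (p * q - 1).map (dilation Δ v t) := by
    rw [Matrix.map_sub _ (map_sub _), Matrix.map_mul, Matrix.map_one _ (map_zero _) (map_one _)]
  obtain ⟨V, hV⟩ := hδ (p.map (dilation Δ v s) * q.map (dilation Δ v s)) fun i j => by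
    rw [hmap]
    rw [hmap] at hpq
    exact (norm_dilation_le Δ v s _).trans_lt (hpq i j)
  exact ⟨q.map (dilation Δ v s) * V⁻¹.val, by rw [← Matrix.mul_assoc, ← hV, Units.mul_inv]⟩

variable [DecidableEq n]

theorem isCompletable_map_dilation_one {v : Fin k → ℝ} {e : m ↪ n}
    {p : Matrix m n (AddMonoidAlgebra ℂ (positiveFrequencies Δ v))}
    (hp : ∀ s, ∃ R : Matrix n m (apClosure k Δ), p.map (dilation Δ v s) * R = 1) :
    IsCompletable e (p.map (dilation Δ v 1)) := by
  have hcont : Continuous fun s => p.map (dilation Δ v s) :=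
    continuous_matrix fun i j => continuous_dilation Δ v (p i j)
  refine (isCompletable_iff_of_continuous hcont hp 0 1).1 ?_
  obtain ⟨R, hR⟩ := hp 0
  choose C hC using fun i j => Algebra.mem_bot.1 (dilation_zero_mem_bot Δ v (p i j))
  have hC0 : (Matrix.of C).map (algebraMap ℂ (apClosure k Δ)) = p.map (dilation Δ v 0) :=
    Matrix.ext hC
  rw [← hC0] at hR ⊢
  exact isCompletable_map_algebraMap hR

theorem isCompletable_of_mul_eq_one {e : m ↪ n}
    (hΔ : (0 : Fin k → ℝ) ∉ convexHull ℝ ((Δ : Set (Fin k → ℝ)) \ {0}))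
    {M : Matrix m n (apClosure k Δ)} {R : Matrix n m (apClosure k Δ)} (h : M * R = 1) :
    IsCompletable e M := by
  have : Fintype m := Fintype.ofInjective e e.injective
  obtain ⟨δ, hδ, hunit⟩ := exists_isUnit_matrix_of_norm_sub_one_lt (n := m) (A := apClosure k Δ)
  have hclose : ∀ᶠ z : Matrix m n (apClosure k Δ) × Matrix n m (apClosure k Δ) in nhds (M, R),
      ∀ i j, ‖(z.1 * z.2 - 1 : Matrix m m (apClosure k Δ)) i j‖ < δ := by
    refine eventually_all.2 fun i => eventually_all.2 fun j => ?_
    have hcont : Continuous fun z : Matrix m n (apClosure k Δ) × Matrix n m (apClosure k Δ) =>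
        ‖(z.1 * z.2 - 1 : Matrix m m (apClosure k Δ)) i j‖ := by fun_prop
    exact hcont.continuousAt.eventually_lt continuousAt_const (by simpa [h] using hδ)
  have hcompl := (eventually_isCompletable_iff (e := e) h).prod_inl_nhds R
  have hfreq := mem_closure_iff_frequently.1
    (((dense_setOf_matrix_span_apClosureExp Δ m n).prod
      (dense_setOf_matrix_span_apClosureExp Δ n m)) (M, R))
  obtain ⟨⟨P, Q⟩, ⟨hP, hQ⟩, hPQ, hPM⟩ := (hfreq.and_eventually (hclose.and hcompl)).exists
  obtain ⟨v, hv⟩ := exists_forall_mem_range_dilation_one hΔ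
    (f := Sum.elim (fun z : m × n => P z.1 z.2) fun z : n × m => Q z.1 z.2)
    (Sum.rec (fun z => hP z.1 z.2) fun z => hQ z.1 z.2)
  choose p hp using fun i j => hv (Sum.inl (i, j))
  choose q hq using fun i j => hv (Sum.inr (i, j))
  obtain rfl : (Matrix.of p).map (dilation Δ v 1) = P := Matrix.ext hp
  obtain rfl : (Matrix.of q).map (dilation Δ v 1) = Q := Matrix.ext hq
  exact hPM.1 (isCompletable_map_dilation_one (exists_map_dilation_mul_eq_one hunit hPQ))

theorem exists_invertible_completion {e : m ↪ n}
    (hΔ : (0 : Fin k → ℝ) ∉ convexHull ℝ ((Δ : Set (Fin k → ℝ)) \ {0}))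
    {M : Matrix m n (APB k)} {R : Matrix n m (APB k)} (hM : ∀ i j, APmem k Δ (M i j))
    (hR : ∀ i j, APmem k Δ (R i j)) (h : M * R = 1) :
    ∃ N N' : Matrix n n (APB k), (∀ i j, APmem k Δ (N i j)) ∧ (∀ i j, APmem k Δ (N' i j)) ∧
      N * N' = 1 ∧ N.submatrix e id = M := by
  simp only [APmem_iff_mem_apClosure] at hM hR ⊢
  have hinj : Function.Injective (apClosure k Δ).val := Subtype.val_injective
  obtain ⟨M, rfl⟩ : ∃ M' : Matrix m n (apClosure k Δ), M'.map (apClosure k Δ).val = M :=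
    ⟨fun i j => ⟨M i j, hM i j⟩, rfl⟩
  obtain ⟨R, rfl⟩ : ∃ R' : Matrix n m (apClosure k Δ), R'.map (apClosure k Δ).val = R :=
    ⟨fun i j => ⟨R i j, hR i j⟩, rfl⟩
  have := Fintype.ofInjective e e.injective
  have hMR : M * R = 1 := Matrix.map_injective hinj <| by
    dsimp only
    rw [Matrix.map_mul, h, Matrix.map_one _ (map_zero _) (map_one _)]
  obtain ⟨_, ⟨U, rfl⟩, rfl⟩ := isCompletable_of_mul_eq_one (e := e) hΔ hMR
  refine ⟨U.val.map (apClosure k Δ).val, U⁻¹.val.map (apClosure k Δ).val,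
    fun i j => (U.val i j).2, fun i j => (U⁻¹.val i j).2, ?_, rfl⟩
  rw [← Matrix.map_mul, Units.mul_inv, Matrix.map_one _ (map_zero _) (map_one _)]

end AlmostPeriodicCompletion

/-! ### Augmentation of rectangular factorizations -/

section Augmentation

open scoped Pointwise

variable {k m n p : ℕ}

theorem APmem.mono {Δ Δ' : Set (Fin k → ℝ)} {f : APB k} (h : APmem k Δ f) (hΔ : Δ ⊆ Δ') :
    APmem k Δ' f :=
  ⟨h.1, h.2.trans hΔ⟩

theorem IsAPFactorization.APmem_apply {S : Set (Fin k → ℝ)} {Sg : AddSubmonoid (Fin k → ℝ)}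
    {G : Matrix (Fin m) (Fin n) (APB k)} {lam : Fin p → (Fin k → ℝ)}
    {Gp : Matrix (Fin m) (Fin p) (APB k)} {Gm : Matrix (Fin p) (Fin n) (APB k)}
    (h : IsAPFactorization k S Sg G lam Gp Gm) (i : Fin m) (j : Fin n) : APmem k Sg (G i j) := by
  obtain ⟨hp, hm, hlam, -, -, rfl⟩ := h
  rw [APmem_iff_mem_apClosure, Matrix.mul_apply]
  refine Subalgebra.sum_mem _ fun l _ => ?_
  rw [Matrix.mul_diagonal]
  have hGp := APmem_iff_mem_apClosure.1 ((hp i l).mono Set.inter_subset_left)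
  have hGm := APmem_iff_mem_apClosure.1 ((hm l j).mono Set.inter_subset_left)
  exact mul_mem (mul_mem hGp (apClosureExp Sg ⟨lam l, hlam l⟩).2) hGm

theorem IsAPFactorization.transpose {S Sg : Set (Fin k → ℝ)}
    {G : Matrix (Fin m) (Fin n) (APB k)} {lam : Fin p → (Fin k → ℝ)}
    {Gp : Matrix (Fin m) (Fin p) (APB k)} {Gm : Matrix (Fin p) (Fin n) (APB k)}
    (h : IsAPFactorization k S Sg G lam Gp Gm) :
    IsAPFactorization k (-S) Sg G.transpose lam Gm.transpose Gp.transpose := by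
  obtain ⟨hp, hm, hlam, ⟨R, hR, hGpR⟩, ⟨L, hL, hLGm⟩, rfl⟩ := h
  refine ⟨fun i j => hm j i, fun i j => ?_, hlam, ⟨L.transpose, fun i j => hL j i, ?_⟩,
    ⟨R.transpose, fun i j => ?_, ?_⟩, ?_⟩
  · exact (neg_neg S).symm ▸ hp j i
  · rw [← Matrix.transpose_mul, hLGm, Matrix.transpose_one]
  · exact (neg_neg S).symm ▸ hR j i
  · rw [← Matrix.transpose_mul, hGpR, Matrix.transpose_one]
  · rw [Matrix.transpose_mul, Matrix.transpose_mul, Matrix.diagonal_transpose, Matrix.mul_assoc]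

theorem exists_isAPFactorization_transpose_iff {S Sg : Set (Fin k → ℝ)}
    {G : Matrix (Fin m) (Fin n) (APB k)} {lam : Fin p → (Fin k → ℝ)} :
    (∃ Gp Gm, IsAPFactorization k (-S) Sg G.transpose lam Gp Gm) ↔
      ∃ Gp Gm, IsAPFactorization k S Sg G lam Gp Gm :=
  ⟨fun ⟨_, _, h⟩ => ⟨_, _, by simpa only [neg_neg, Matrix.transpose_transpose] using h.transpose⟩,
    fun ⟨_, _, h⟩ => ⟨_, _, h.transpose⟩⟩

variable {S Sg : AddSubmonoid (Fin k → ℝ)}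

theorem exists_isAPFactorization_iff_augment_rows
    (hS : (0 : Fin k → ℝ) ∉ convexHull ℝ ((S : Set (Fin k → ℝ)) \ {0})) (e : Fin m ↪ Fin n)
    {G : Matrix (Fin m) (Fin n) (APB k)} {lam : Fin n → (Fin k → ℝ)} :
    (∃ Gp Gm, IsAPFactorization k S Sg G lam Gp Gm) ↔
      ∃ F : Matrix (Fin n) (Fin n) (APB k), (∀ i j, APmem k Sg (F i j)) ∧
        (∀ i j, F (e i) j = G i j) ∧ ∃ Fp Fm, IsAPFactorization k S Sg F lam Fp Fm := by
  constructor
  · rintro ⟨Gp, Gm, hp, hm, hlam, ⟨R, hR, hGpR⟩, hleft, rfl⟩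
    have hSgS : (0 : Fin k → ℝ) ∉ convexHull ℝ (((Sg ⊓ S : AddSubmonoid _) : Set _) \ {0}) :=
      fun h => hS (convexHull_mono (Set.sdiff_subset_sdiff_left Set.inter_subset_right) h)
    obtain ⟨Fp, Fpr, hFp, hFpr, hinv, rfl⟩ :=
      exists_invertible_completion (e := e) (Δ := Sg ⊓ S) hSgS hp hR hGpR
    have hF : IsAPFactorization k S Sg
        (Fp * Matrix.diagonal (fun j => apExp k (lam j)) * Gm) lam Fp Gm :=
      ⟨hFp, hm, hlam, ⟨Fpr, hFpr, hinv⟩, hleft, rfl⟩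
    exact ⟨_, hF.APmem_apply, fun i j => rfl, Fp, Gm, hF⟩
  · rintro ⟨F, -, hFG, Fp, Fm, hp, hm, hlam, ⟨R, hR, hFpR⟩, hleft, rfl⟩
    refine ⟨Fp.submatrix e id, Fm, fun i j => hp _ _, hm, hlam,
      ⟨R.submatrix id e, fun i j => hR _ _, ?_⟩, hleft, Matrix.ext fun i j => (hFG i j).symm⟩
    rw [← Matrix.submatrix_mul _ _ _ _ _ Function.bijective_id, hFpR,
      Matrix.submatrix_one _ e.injective]

theorem exists_isAPFactorization_iff_augment_columns
    (hS : (0 : Fin k → ℝ) ∉ convexHull ℝ ((S : Set (Fin k → ℝ)) \ {0})) (e : Fin n ↪ Fin m)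
    {G : Matrix (Fin m) (Fin n) (APB k)} {lam : Fin m → (Fin k → ℝ)} :
    (∃ Gp Gm, IsAPFactorization k S Sg G lam Gp Gm) ↔
      ∃ F : Matrix (Fin m) (Fin m) (APB k), (∀ i j, APmem k Sg (F i j)) ∧
        (∀ i j, F i (e j) = G i j) ∧ ∃ Fp Fm, IsAPFactorization k S Sg F lam Fp Fm := by
  have hneg : (0 : Fin k → ℝ) ∉ convexHull ℝ (((-S : AddSubmonoid (Fin k → ℝ)) : Set _) \ {0}) := by
    have hset : ((-S : AddSubmonoid (Fin k → ℝ)) : Set (Fin k → ℝ)) \ {0} =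
        -((S : Set (Fin k → ℝ)) \ {0}) := by
      ext a
      simp
    rwa [hset, convexHull_neg, Set.mem_neg, neg_zero]
  refine exists_isAPFactorization_transpose_iff.symm.trans
    ((exists_isAPFactorization_iff_augment_rows hneg e).trans ?_)
  constructor
  · rintro ⟨F, hF, hFG, h⟩
    exact ⟨F.transpose, fun i j => hF j i, fun i j => hFG j i,
      exists_isAPFactorization_transpose_iff.1 (F.transpose_transpose.symm ▸ h)⟩
  · rintro ⟨F, hF, hFG, h⟩
    exact ⟨F.transpose, fun i j => hF j i, fun i j => hFG j i,
      exists_isAPFactorization_transpose_iff.2 h⟩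

end Augmentation

section Halfspace

variable {k : ℕ} {S : Set (Fin k → ℝ)}

/-- A halfspace as an additive submonoid of the frequencies. -/
def IsHalfspace.toAddSubmonoid (hS : IsHalfspace k S) : AddSubmonoid (Fin k → ℝ) where
  carrier := S
  zero_mem' := (hS.inter.ge rfl : (0 : Fin k → ℝ) ∈ S ∩ -S).1
  add_mem' hx hy := hS.add_mem _ hx _ hy

theorem IsHalfspace.convex_sdiff_zero (hS : IsHalfspace k S) : Convex ℝ (S \ {0}) := by
  rintro x ⟨hx, hx0⟩ y ⟨hy, hy0⟩ a b ha hb hab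
  have hax := hS.smul_mem x hx a ha
  have hby := hS.smul_mem y hy b hb
  refine ⟨hS.add_mem _ hax _ hby, fun (h0 : a • x + b • y = 0) => ?_⟩
  have hax0 : a • x = 0 :=
    hS.inter.le ⟨hax, Set.mem_neg.2 ((neg_eq_of_add_eq_zero_right h0).symm ▸ hby)⟩
  have hby0 : b • y = 0 := by rwa [hax0, zero_add] at h0
  have ha0 : a = 0 := (smul_eq_zero.1 hax0).resolve_right hx0
  have hb0 : b = 0 := (smul_eq_zero.1 hby0).resolve_right hy0
  rw [ha0, hb0, zero_add] at hab
  exact zero_ne_one hab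

theorem IsHalfspace.zero_notMem_convexHull (hS : IsHalfspace k S) :
    (0 : Fin k → ℝ) ∉ convexHull ℝ (S \ {0}) := by
  rw [hS.convex_sdiff_zero.convexHull_eq]
  exact fun h => h.2 rfl

end Halfspace

theorem rectangular_factorization_iff_augmentation_general {k : ℕ}
    {S : AddSubmonoid (Fin k → ℝ)}
    (hS : (0 : Fin k → ℝ) ∉ convexHull ℝ ((S : Set (Fin k → ℝ)) \ {0}))
    (Sg : AddSubmonoid (Fin k → ℝ)) :
    (∀ (m n : ℕ) (e : Fin m ↪ Fin n) (G : Matrix (Fin m) (Fin n) (APB k))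
      (lam : Fin n → (Fin k → ℝ)),
        (∃ Gp Gm, IsAPFactorization k S Sg G lam Gp Gm) ↔
        (∃ F : Matrix (Fin n) (Fin n) (APB k),
          (∀ i j, APmem k Sg (F i j)) ∧
          (∀ (i : Fin m) (j : Fin n), F (e i) j = G i j) ∧
          ∃ Fp Fm, IsAPFactorization k S Sg F lam Fp Fm)) ∧
    (∀ (m n : ℕ) (e : Fin n ↪ Fin m) (G : Matrix (Fin m) (Fin n) (APB k))
      (lam : Fin m → (Fin k → ℝ)),
        (∃ Gp Gm, IsAPFactorization k S Sg G lam Gp Gm) ↔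
        (∃ F : Matrix (Fin m) (Fin m) (APB k),
          (∀ i j, APmem k Sg (F i j)) ∧
          (∀ (i : Fin m) (j : Fin n), F i (e j) = G i j) ∧
          ∃ Fp Fm, IsAPFactorization k S Sg F lam Fp Fm)) :=
  ⟨fun _ _ e _ _ => exists_isAPFactorization_iff_augment_rows hS e,
    fun _ _ e _ _ => exists_isAPFactorization_iff_augment_columns hS e⟩

/-- **Theorem 4.2.**  Let `S ⊂ ℝ^k` be a halfspace, `Σ` an additive subgroup
of `ℝ^k`, and `G ∈ (AP^k_Σ)^{m×n}`.  If `m < n` (resp. `m > n`), then `G`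
admits a left `(AP_S)_Σ` factorization with indices `λ_1, …, λ_p`
(`p = max{m,n}`) if and only if `G` can be augmented by `n - m` rows
(resp. `m - n` columns) with entries in `AP^k_Σ` to a square `p × p` matrix
function admitting a left `(AP_S)_Σ` factorization with the same indices.
(In particular, taking all indices `0`, `G` admits a canonical `(AP_S)_Σ`
factorization iff it can be augmented to a square matrix function admitting a
canonical `(AP_S)_Σ` factorization.) -/
theorem rectangular_factorization_iff_augmentation (k : ℕ)
    (S : Set (Fin k → ℝ)) (hS : IsHalfspace k S)
    (Sg : AddSubgroup (Fin k → ℝ)) :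
    (∀ (m n : ℕ) (hmn : m < n) (G : Matrix (Fin m) (Fin n) (APB k)),
      (∀ i j, APmem k (↑Sg) (G i j)) →
      ∀ lam : Fin n → (Fin k → ℝ),
        (∃ Gp Gm, IsAPFactorization k S (↑Sg) G lam Gp Gm) ↔
        (∃ F : Matrix (Fin n) (Fin n) (APB k),
          (∀ i j, APmem k (↑Sg) (F i j)) ∧
          (∀ (i : Fin m) (j : Fin n), F (Fin.castLE hmn.le i) j = G i j) ∧
          ∃ Fp Fm, IsAPFactorization k S (↑Sg) F lam Fp Fm)) ∧
    (∀ (m n : ℕ) (hnm : n < m) (G : Matrix (Fin m) (Fin n) (APB k)),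
      (∀ i j, APmem k (↑Sg) (G i j)) →
      ∀ lam : Fin m → (Fin k → ℝ),
        (∃ Gp Gm, IsAPFactorization k S (↑Sg) G lam Gp Gm) ↔
        (∃ F : Matrix (Fin m) (Fin m) (APB k),
          (∀ i j, APmem k (↑Sg) (F i j)) ∧
          (∀ (i : Fin m) (j : Fin n), F i (Fin.castLE hnm.le j) = G i j) ∧
          ∃ Fp Fm, IsAPFactorization k S (↑Sg) F lam Fp Fm)) := by
  have h := rectangular_factorization_iff_augmentation_general (S := hS.toAddSubmonoid)
    hS.zero_notMem_convexHull Sg.toAddSubmonoid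
  exact ⟨fun m n hmn G _ => h.1 m n (Fin.castLEEmb hmn.le) G,
    fun m n hnm G _ => h.2 m n (Fin.castLEEmb hnm.le) G⟩
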